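/- Let x be an arbitrary vertex of a connected graph G of odd order. Then G has a 1-perfect forest F such that x is the unique vertex of F having even degree (possibly zero) in F. -/

import Mathlib

open SimpleGraph

/-- The degree of `v` in `F`, defined via `Set.ncard` so that no decidability
instances are needed. -/
noncomputable def fdeg {V : Type*} (F : SimpleGraph V) (v : V) : ℕ :=
  (F.neighborSet v).ncard

/-- `F` is a semiperfect spanning forest of `G`: `F` is a spanning subgraph of `G`
that is a forest, and every connected component of `F` is an induced subgraph of `G`. -/
def IsSemiperfectForest {V : Type*} (G F : SimpleGraph V) : Prop :=
  F ≤ G ∧ F.IsAcyclic ∧ ∀ x y : V, F.Reachable x y → G.Adj x y → F.Adj x y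

/-!
The sets of odd-degree vertices of finite subgraphs add up under symmetric difference, and a walk
from `a` to `b` contains a subgraph with odd-degree set `{a} ∆ {b}`. Hence in a connected graph
every finite set `T` of even cardinality is the odd-degree set of a finite subgraph. Among those,
one with fewest edges is a semiperfect forest: if some edge `uv` of `G` joined vertices that the
subgraph `F` connects without using `uv`, then `F` would contain a subgraph `H` avoiding `uv` with
odd-degree set `{u, v}`; such an `H` has at least two edges, so `F ∆ H ∆ uv` would have the same
odd-degree set and fewer edges. Take `T` to be the set of all vertices other than `x`.
-/

open scoped symmDiff

theorem symmDiff_le_of_le_of_le {α : Type*} [GeneralizedCoheytingAlgebra α] {a b c : α}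
    (ha : a ≤ c) (hb : b ≤ c) : a ∆ b ≤ c :=
  symmDiff_le_sup.trans (sup_le ha hb)

theorem odd_ncard_symmDiff_iff {α : Type*} {s t : Set α} (hs : s.Finite) (ht : t.Finite) :
    Odd (s ∆ t).ncard ↔ ¬(Odd s.ncard ↔ Odd t.ncard) := by
  have hst : (s ∆ t).ncard = (s \ t).ncard + (t \ s).ncard :=
    Set.ncard_union_eq disjoint_sdiff_sdiff hs.sdiff ht.sdiff
  have hs_split := Set.ncard_inter_add_ncard_sdiff_eq_ncard s t hs
  have ht_split := Set.ncard_inter_add_ncard_sdiff_eq_ncard t s ht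
  rw [Set.inter_comm t s] at ht_split
  rw [hst, ← hs_split, ← ht_split]
  grind

section Graph

variable {V : Type*} {F G H : SimpleGraph V} {u v : V}

theorem edgeSet_symmDiff (F H : SimpleGraph V) : (F ∆ H).edgeSet = F.edgeSet ∆ H.edgeSet := by
  simp only [symmDiff_def, edgeSet_sup, edgeSet_sdiff, Set.sup_eq_union]

theorem finite_neighborSet_of_finite_edgeSet (hF : F.edgeSet.Finite) (v : V) :
    (F.neighborSet v).Finite :=
  hF.preimage (f := fun w ↦ s(v, w)) fun _ _ _ _ h ↦ Sym2.congr_right.1 h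

theorem finite_edgeSet_symmDiff (hF : F.edgeSet.Finite) (hH : H.edgeSet.Finite) :
    (F ∆ H).edgeSet.Finite :=
  edgeSet_symmDiff F H ▸ hF.symmDiff hH

theorem finite_edgeSet_edge (u v : V) : (edge u v).edgeSet.Finite :=
  (Set.finite_singleton _).subset edgeSet_edge_subset

/-- The set of vertices of odd degree, so that `F` is a `T`-join precisely when
`oddVertices F = T`. A vertex of infinite degree is not in it, since its `fdeg` is `0`. -/
def oddVertices (F : SimpleGraph V) : Set V :=
  {v | Odd (fdeg F v)}

theorem oddVertices_bot : oddVertices (⊥ : SimpleGraph V) = ∅ := by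
  simp [oddVertices, fdeg]

theorem oddVertices_symmDiff (hF : F.edgeSet.Finite) (hH : H.edgeSet.Finite) :
    oddVertices (F ∆ H) = oddVertices F ∆ oddVertices H := by
  ext v
  have hnbr : (F ∆ H).neighborSet v = F.neighborSet v ∆ H.neighborSet v := rfl
  have hodd := odd_ncard_symmDiff_iff (finite_neighborSet_of_finite_edgeSet hF v)
    (finite_neighborSet_of_finite_edgeSet hH v)
  simp only [oddVertices, fdeg, Set.mem_symmDiff, Set.mem_ofPred_eq, hnbr, hodd]
  tauto

theorem fdeg_edge_left (huv : u ≠ v) : fdeg (edge u v) u = 1 := by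
  have hnbr : (edge u v).neighborSet u = {v} := by
    ext w
    simp only [mem_neighborSet, edge_adj, Set.mem_singleton_iff]
    grind
  rw [fdeg, hnbr, Set.ncard_singleton]

theorem fdeg_edge_right (huv : u ≠ v) : fdeg (edge u v) v = 1 :=
  edge_comm u v ▸ fdeg_edge_left huv.symm

theorem fdeg_edge_of_ne {w : V} (hwu : w ≠ u) (hwv : w ≠ v) : fdeg (edge u v) w = 0 := by
  have hnbr : (edge u v).neighborSet w = ∅ := by
    ext z
    simp [edge_adj, hwu, hwv]
  rw [fdeg, hnbr, Set.ncard_empty]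

theorem oddVertices_edge (u v : V) : oddVertices (edge u v) = {u} ∆ {v} := by
  obtain rfl | huv := eq_or_ne u v
  · simp [oddVertices_bot]
  ext w
  obtain rfl | hwu := eq_or_ne w u
  · simp [oddVertices, Set.mem_symmDiff, fdeg_edge_left huv, huv]
  obtain rfl | hwv := eq_or_ne w v
  · simp [oddVertices, Set.mem_symmDiff, fdeg_edge_right huv, hwu]
  · simp [oddVertices, Set.mem_symmDiff, fdeg_edge_of_ne hwu hwv, hwu, hwv]

theorem exists_oddVertices_eq_of_reachable (huv : G.Reachable u v) :
    ∃ H ≤ G, H.edgeSet.Finite ∧ oddVertices H = {u} ∆ {v} := by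
  obtain ⟨p⟩ := huv
  induction p with
  | nil => exact ⟨⊥, bot_le, by simp, by simp [oddVertices_bot]⟩
  | @cons u w v huw _ ih =>
    obtain ⟨H, hHG, hH, hodd⟩ := ih
    have hedge := finite_edgeSet_edge u w
    refine ⟨edge u w ∆ H, symmDiff_le_of_le_of_le ((edge_le_iff G).2 (.inr huw)) hHG,
      finite_edgeSet_symmDiff hedge hH, ?_⟩
    rw [oddVertices_symmDiff hedge hH, oddVertices_edge, hodd, symmDiff_assoc,
      symmDiff_symmDiff_cancel_left]

theorem exists_oddVertices_eq_of_even_card (hG : G.Preconnected) (T : Finset V) (hT : Even T.card) :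
    ∃ H ≤ G, H.edgeSet.Finite ∧ oddVertices H = T := by
  classical
  induction T using Finset.strongInduction with
  | H T ih =>
    obtain rfl | ⟨a, ha⟩ := T.eq_empty_or_nonempty
    · exact ⟨⊥, bot_le, by simp, by simp [oddVertices_bot]⟩
    have hcard : (T.erase a).card + 1 = T.card := Finset.card_erase_add_one ha
    obtain ⟨b, hb⟩ : (T.erase a).Nonempty := Finset.card_pos.1 (by grind)
    have hcard' : ((T.erase a).erase b).card + 1 = (T.erase a).card := Finset.card_erase_add_one hb
    obtain ⟨H, hHG, hH, hodd⟩ := ih ((T.erase a).erase b)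
      ((Finset.erase_ssubset hb).trans (Finset.erase_ssubset ha)) (by grind)
    obtain ⟨P, hPG, hP, hodd_P⟩ := exists_oddVertices_eq_of_reachable (hG a b)
    refine ⟨H ∆ P, symmDiff_le_of_le_of_le hHG hPG, finite_edgeSet_symmDiff hH hP, ?_⟩
    rw [oddVertices_symmDiff hH hP, hodd, hodd_P]
    ext w
    simp only [Set.mem_symmDiff, Finset.mem_coe, Finset.mem_erase, Set.mem_singleton_iff]
    grind

theorem exists_adj_of_mem_oddVertices (hv : v ∈ oddVertices F) : ∃ w, F.Adj v w :=
  Set.nonempty_of_ncard_ne_zero (Odd.pos hv).ne'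

theorem one_lt_ncard_edgeSet_of_mem_oddVertices (hF : F.edgeSet.Finite)
    (hu : u ∈ oddVertices F) (hv : v ∈ oddVertices F) (huv : u ≠ v) (hadj : ¬F.Adj u v) :
    1 < F.edgeSet.ncard := by
  obtain ⟨a, ha⟩ := exists_adj_of_mem_oddVertices hu
  obtain ⟨b, hb⟩ := exists_adj_of_mem_oddVertices hv
  refine (Set.one_lt_ncard hF).2 ⟨s(u, a), ha, s(v, b), hb, fun h ↦ ?_⟩
  rcases Sym2.eq_iff.1 h with ⟨h, -⟩ | ⟨-, rfl⟩
  · exact huv h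
  · exact hadj ha

theorem ncard_edgeSet_symmDiff_edge_lt (hF : F.edgeSet.Finite) (hHF : H ≤ F)
    (hH : 1 < H.edgeSet.ncard) (u v : V) :
    ((F ∆ H) ∆ edge u v).edgeSet.ncard < F.edgeSet.ncard := by
  have hsub : ((F ∆ H) ∆ edge u v).edgeSet ⊆ insert s(u, v) (F.edgeSet \ H.edgeSet) := by
    rw [symmDiff_of_ge hHF, edgeSet_symmDiff, edgeSet_sdiff]
    exact Set.symmDiff_subset_union.trans
      (Set.union_subset (Set.subset_insert _ _) (edgeSet_edge_subset.trans (by simp)))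
  calc ((F ∆ H) ∆ edge u v).edgeSet.ncard
      ≤ (insert s(u, v) (F.edgeSet \ H.edgeSet)).ncard :=
        Set.ncard_le_ncard hsub (hF.sdiff.insert _)
    _ ≤ (F.edgeSet \ H.edgeSet).ncard + 1 := Set.ncard_insert_le _ _
    _ < (F.edgeSet \ H.edgeSet).ncard + H.edgeSet.ncard := by gcongr
    _ = F.edgeSet.ncard := Set.ncard_sdiff_add_ncard_of_subset (edgeSet_mono hHF) hF

theorem exists_ncard_edgeSet_lt_of_not_isBridge (hF : F.edgeSet.Finite) (hFG : F ≤ G)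
    (huv : G.Adj u v) (hbridge : ¬F.IsBridge s(u, v)) :
    ∃ F' ≤ G, F'.edgeSet.Finite ∧ oddVertices F' = oddVertices F ∧
      F'.edgeSet.ncard < F.edgeSet.ncard := by
  obtain ⟨H, hHF', hH, hodd⟩ := exists_oddVertices_eq_of_reachable (not_not.1 hbridge)
  have hHF : H ≤ F := hHF'.trans (deleteEdges_le _)
  have hadj : ¬H.Adj u v := fun h ↦ by simpa using hHF' h
  have hcard : 1 < H.edgeSet.ncard :=
    one_lt_ncard_edgeSet_of_mem_oddVertices hH (by simp [hodd, Set.mem_symmDiff, huv.ne])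
      (by simp [hodd, Set.mem_symmDiff, huv.ne']) huv.ne hadj
  have hedge := finite_edgeSet_edge u v
  have hFH := finite_edgeSet_symmDiff hF hH
  refine ⟨(F ∆ H) ∆ edge u v, ?_, finite_edgeSet_symmDiff hFH hedge, ?_,
    ncard_edgeSet_symmDiff_edge_lt hF hHF hcard u v⟩
  · exact symmDiff_le_of_le_of_le (symmDiff_le_of_le_of_le hFG (hHF.trans hFG))
      ((edge_le_iff G).2 (.inr huv))
  · rw [oddVertices_symmDiff hFH hedge, oddVertices_symmDiff hF hH, oddVertices_edge, hodd,
      symmDiff_symmDiff_cancel_right]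

theorem isSemiperfectForest_of_forall_isBridge (hFG : F ≤ G)
    (hbridge : ∀ u v, G.Adj u v → F.IsBridge s(u, v)) : IsSemiperfectForest G F := by
  refine ⟨hFG, isAcyclic_iff_forall_adj_isBridge.2 fun u v huv ↦ hbridge u v (hFG huv), ?_⟩
  intro u v hreach huv
  by_contra hadj
  refine hbridge u v huv ?_
  rwa [deleteEdges_eq_self.2 (Set.disjoint_singleton_right.2 hadj)]

theorem exists_isSemiperfectForest_oddVertices_eq (hF : F.edgeSet.Finite) (hFG : F ≤ G) :
    ∃ F', IsSemiperfectForest G F' ∧ F'.edgeSet.Finite ∧ oddVertices F' = oddVertices F := by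
  induction hn : F.edgeSet.ncard using Nat.strong_induction_on generalizing F with
  | _ n ih =>
    by_cases hbridge : ∀ u v, G.Adj u v → F.IsBridge s(u, v)
    · exact ⟨F, isSemiperfectForest_of_forall_isBridge hFG hbridge, hF, rfl⟩
    · push Not at hbridge
      obtain ⟨u, v, huv, hnot⟩ := hbridge
      obtain ⟨F₁, hF₁G, hF₁, hodd₁, hlt⟩ := exists_ncard_edgeSet_lt_of_not_isBridge hF hFG huv hnot
      obtain ⟨F', hF', hfin, hodd⟩ := ih _ (hn ▸ hlt) hF₁ hF₁G rfl
      exact ⟨F', hF', hfin, hodd.trans hodd₁⟩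

theorem exists_one_perfect_forest_even_at_general (hG : G.Preconnected) (T : Finset V)
    (hT : Even T.card) :
    ∃ F, IsSemiperfectForest G F ∧ F.edgeSet.Finite ∧ oddVertices F = T := by
  obtain ⟨H, hHG, hH, hodd⟩ := exists_oddVertices_eq_of_even_card hG T hT
  exact hodd ▸ exists_isSemiperfectForest_oddVertices_eq hH hHG

end Graph

/-- Let `x` be an arbitrary vertex of a connected graph `G` of odd order.
Then `G` has a 1-perfect forest `F` (a semiperfect spanning forest with exactly one
vertex of even degree) such that `x` is the unique vertex of even degree in `F`. -/
theorem exists_one_perfect_forest_even_at {V : Type*} [Fintype V]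
    (G : SimpleGraph V) (hG : G.Connected) (hodd : Odd (Fintype.card V)) (x : V) :
    ∃ F : SimpleGraph V, IsSemiperfectForest G F ∧
      Even (fdeg F x) ∧ ∀ w : V, w ≠ x → Odd (fdeg F w) := by
  classical
  have heven : Even (Finset.univ.erase x).card := by
    simpa [Finset.card_erase_of_mem] using hodd.tsub_odd odd_one
  obtain ⟨F, hF, -, hodd_eq⟩ :=
    exists_one_perfect_forest_even_at_general hG.preconnected (Finset.univ.erase x) heven
  have hdeg (w : V) : Odd (fdeg F w) ↔ w ≠ x := by
    simpa [oddVertices] using Set.ext_iff.1 hodd_eq w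
  exact ⟨F, hF, by simpa using (hdeg x).not, fun w ↦ (hdeg w).2⟩
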